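/- arXiv:math/0509461 — 6 statements merged into one kernel-verified Lean document; each statement's English description precedes it below -/
import Mathlib

section
/- Let M be a ring and Φ : M → M a ring homomorphism, and let A₁ denote the centralizer of the range of Φ (the set of x ∈ M commuting with every element of Φ(M)). Then for all natural numbers k and all i < k: (a) for every x ∈ A₁, the element Φ^i(x) commutes with every element of the range of Φ^k; and (b) for all i < i' < k and all x, y ∈ A₁, Φ^i(x) · Φ^{i'}(y) = Φ^{i'}(y) · Φ^i(x). (In particular the subalgebras A₁, Φ(A₁), …, Φ^{k−1}(A₁) pairwise commute and are all contained in the centralizer of Φ^k(M).) -/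
/-- Lemma 1 of the paper: the relative commutant `Φ^k(M)' ∩ M` contains
pairwise commuting copies `Φ^i(A₁)` for `i = 0, …, k−1`, where
`A₁ = Φ(M)' ∩ M` is the centralizer of the range of `Φ`. -/
theorem statement0 {M : Type*} [Ring M] (Φ : M →+* M) (A₁ : Set M)
    (hA₁ : A₁ = Set.centralizer (Set.range ⇑Φ)) :
    ∀ k : ℕ, ∀ i < k,
      (∀ x ∈ A₁, ∀ z ∈ Set.range ((⇑Φ)^[k]), (⇑Φ)^[i] x * z = z * (⇑Φ)^[i] x) ∧
      (∀ i' : ℕ, i < i' → i' < k → ∀ x ∈ A₁, ∀ y ∈ A₁,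
        (⇑Φ)^[i] x * (⇑Φ)^[i'] y = (⇑Φ)^[i'] y * (⇑Φ)^[i] x) := by
  subst hA₁
  have key : ∀ k i : ℕ, i < k → ∀ x ∈ Set.centralizer (Set.range ⇑Φ), ∀ w : M,
      (⇑Φ)^[i] x * (⇑Φ)^[k] w = (⇑Φ)^[k] w * (⇑Φ)^[i] x := by
    intro k i hik x hx w
    obtain ⟨d, rfl⟩ := Nat.exists_eq_add_of_lt hik
    have h : Φ ((⇑Φ)^[d] w) * x = x * Φ ((⇑Φ)^[d] w) := hx _ ⟨_, rfl⟩
    rw [add_assoc, Function.iterate_add_apply, Function.iterate_succ_apply',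
      ← iterate_map_mul, ← iterate_map_mul, h]
  intro k i hik
  refine ⟨?_, ?_⟩
  · rintro x hx z ⟨w, rfl⟩
    exact key k i hik x hx w
  · intro i' h _ x hx y _
    exact key i' i h x hx y
end

section
/- With A and r as defined in the context, the unital ℂ-subalgebra of M_n(ℂ) generated by A ∪ {r} equals the linear span of the set {x·r^m·y : 0 ≤ m ≤ j−1, x ∈ A, y ∈ A}, and this subalgebra is all of M_n(ℂ). (That is, ⟨A, r⟩ = A + A r A + A r² A + ⋯ + A r^{j−1} A ≅ M_n(ℂ).) -/
open Matrix

noncomputable section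

/-- The index set `{1, …, n}` partitioned into consecutive blocks
`I_1, …, I_j` of sizes `a 0, …, a (j−1)`. -/
abbrev BIdx (j : ℕ) (a : Fin j → ℕ) : Type := Σ i : Fin j, Fin (a i)

/-- The set of block-diagonal matrices, `A ≅ ⊕_{i=1}^j M_{a_i}(ℂ)`. -/
def blockDiagSet (j : ℕ) (a : Fin j → ℕ) : Set (Matrix (BIdx j a) (BIdx j a) ℂ) :=
  {x | ∀ t t' : BIdx j a, t.1 ≠ t'.1 → x t t' = 0}

/-- `c_i`, the last index of block `I_i`. -/
def lastIdx (j : ℕ) (a : Fin j → ℕ) (ha : ∀ i, 0 < a i) (i : Fin j) : BIdx j a :=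
  ⟨i, ⟨a i - 1, Nat.sub_lt (ha i) Nat.one_pos⟩⟩

/-- The cyclic successor on block labels. -/
def nextIdx (j : ℕ) (hj : 0 < j) (i : Fin j) : Fin j :=
  ⟨((i : ℕ) + 1) % j, Nat.mod_lt _ hj⟩

/-- The permutation `σ` with `σ(c_i) = c_{i+1}` (cyclically) and `σ(t) = t`
for all other `t`. -/
def sigmaPerm (j : ℕ) (a : Fin j → ℕ) (hj : 0 < j) (ha : ∀ i, 0 < a i)
    (t : BIdx j a) : BIdx j a :=
  if t = lastIdx j a ha t.1 then lastIdx j a ha (nextIdx j hj t.1) else t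

/-- The permutation matrix `v` of `σ`: `v_{σ(t), t} = 1`. -/
def vMat (j : ℕ) (a : Fin j → ℕ) (hj : 0 < j) (ha : ∀ i, 0 < a i) :
    Matrix (BIdx j a) (BIdx j a) ℂ :=
  Matrix.of fun t' t : BIdx j a => if t' = sigmaPerm j a hj ha t then (1 : ℂ) else 0

/-- The diagonal projection `s` onto the positions `c_1, …, c_j`. -/
def sMat (j : ℕ) (a : Fin j → ℕ) (ha : ∀ i, 0 < a i) :
    Matrix (BIdx j a) (BIdx j a) ℂ :=
  Matrix.diagonal fun t : BIdx j a => if t = lastIdx j a ha t.1 then (1 : ℂ) else 0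

/-- `r = s v s`. -/
def rMat (j : ℕ) (a : Fin j → ℕ) (hj : 0 < j) (ha : ∀ i, 0 < a i) :
    Matrix (BIdx j a) (BIdx j a) ℂ :=
  sMat j a ha * vMat j a hj ha * sMat j a ha

/-- The central unitary `w = Σ_i γ^{i−1} 1_i`. -/
def wMat (j : ℕ) (a : Fin j → ℕ) (γ : ℂ) : Matrix (BIdx j a) (BIdx j a) ℂ :=
  Matrix.diagonal fun t : BIdx j a => γ ^ (t.1 : ℕ)

/-- The diagonal projection `1_i` onto block `I_i`. -/
def oneBlock (j : ℕ) (a : Fin j → ℕ) (i : Fin j) : Matrix (BIdx j a) (BIdx j a) ℂ :=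
  Matrix.diagonal fun t : BIdx j a => if t.1 = i then (1 : ℂ) else 0

/-- `p_i`: supported on block `I_i`, there equal to
`diag(1, γ_i, …, γ_i^{a_i−1})` with `γ_i = exp(2π i / a_i)`, and `0` outside. -/
def pBlock (j : ℕ) (a : Fin j → ℕ) (i : Fin j) : Matrix (BIdx j a) (BIdx j a) ℂ :=
  Matrix.diagonal fun t : BIdx j a =>
    if t.1 = i then Complex.exp (2 * Real.pi * Complex.I / (a i : ℂ)) ^ (t.2 : ℕ) else 0

/-- `q_i`: supported on block `I_i`, there equal to the cyclic permutation
matrix (mod `a_i`), and `0` outside. -/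
def qBlock (j : ℕ) (a : Fin j → ℕ) (i : Fin j) : Matrix (BIdx j a) (BIdx j a) ℂ :=
  Matrix.of fun t' t : BIdx j a =>
    if t'.1 = i ∧ t.1 = i ∧ (t'.2 : ℕ) = ((t.2 : ℕ) + 1) % a i then (1 : ℂ) else 0

theorem s6_s_single (j : ℕ) (a : Fin j → ℕ) (ha : ∀ i, 0 < a i)
    (k : Fin j) (u : BIdx j a) :
    sMat j a ha * Matrix.single (lastIdx j a ha k) u (1 : ℂ) =
      Matrix.single (lastIdx j a ha k) u (1 : ℂ) := by
  ext p q
  rw [sMat, Matrix.diagonal_mul]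
  by_cases h : lastIdx j a ha k = p
  · subst h
    simp [lastIdx]
  · simp [Matrix.single_apply, h]

theorem s6_v_single (j : ℕ) (a : Fin j → ℕ) (hj : 0 < j) (ha : ∀ i, 0 < a i)
    (k : Fin j) (u : BIdx j a) :
    vMat j a hj ha * Matrix.single (lastIdx j a ha k) u (1 : ℂ) =
      Matrix.single (lastIdx j a ha (nextIdx j hj k)) u (1 : ℂ) := by
  have hs : sigmaPerm j a hj ha (lastIdx j a ha k) = lastIdx j a ha (nextIdx j hj k) := by
    simp [sigmaPerm, lastIdx]
  ext p q
  by_cases h : u = q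
  · subst h
    rw [Matrix.mul_single_apply_same, vMat, Matrix.of_apply, hs, Matrix.single_apply]
    simp [eq_comm]
  · rw [Matrix.mul_single_apply_of_ne _ _ _ _ _ (Ne.symm h), Matrix.single_apply]
    simp [h]

theorem s6_pow_single (j : ℕ) (a : Fin j → ℕ) (hj : 0 < j) (ha : ∀ i, 0 < a i)
    (k : Fin j) (u : BIdx j a) (m : ℕ) :
    rMat j a hj ha ^ m * Matrix.single (lastIdx j a ha k) u (1 : ℂ) =
      Matrix.single (lastIdx j a ha ⟨((k : ℕ) + m) % j, Nat.mod_lt _ hj⟩) u (1 : ℂ) := by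
  induction m with
  | zero =>
    have : (⟨((k : ℕ) + 0) % j, Nat.mod_lt _ hj⟩ : Fin j) = k := by
      ext; simp [Nat.mod_eq_of_lt k.2]
    rw [this]; simp
  | succ m ih =>
    rw [pow_succ', Matrix.mul_assoc, ih, rMat, Matrix.mul_assoc, Matrix.mul_assoc,
      s6_s_single, s6_v_single, s6_s_single]
    congr 2
    ext
    simp [nextIdx, Nat.add_assoc]

theorem s6_single_mem (j : ℕ) (a : Fin j → ℕ) (t t' : BIdx j a) (h : t.1 = t'.1) :
    Matrix.single t t' (1 : ℂ) ∈ blockDiagSet j a := by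
  intro p q hpq
  rw [Matrix.single_apply, if_neg]
  rintro ⟨rfl, rfl⟩
  exact hpq h

theorem s6_span (j : ℕ) (hj : 0 < j) (a : Fin j → ℕ) (ha : ∀ i, 0 < a i) :
    Submodule.span ℂ {z : Matrix (BIdx j a) (BIdx j a) ℂ |
        ∃ m ≤ j - 1, ∃ x ∈ blockDiagSet j a, ∃ y ∈ blockDiagSet j a,
          z = x * rMat j a hj ha ^ m * y} = ⊤ := by
  rw [eq_top_iff]
  intro M _
  rw [Matrix.matrix_eq_sum_single M]
  refine Submodule.sum_mem _ fun t _ => Submodule.sum_mem _ fun t' _ => ?_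
  have e : Matrix.single t t' (M t t') = M t t' • Matrix.single t t' (1 : ℂ) := by
    simp [Matrix.smul_single]
  rw [e]
  refine Submodule.smul_mem _ _ (Submodule.subset_span ?_)
  have h1 := t.1.2
  have h2 := t'.1.2
  refine ⟨((t.1 : ℕ) + (j - t'.1)) % j, Nat.le_sub_one_of_lt (Nat.mod_lt _ hj),
    Matrix.single t (lastIdx j a ha t.1) 1, s6_single_mem _ _ _ _ rfl,
    Matrix.single (lastIdx j a ha t'.1) t' 1, s6_single_mem _ _ _ _ rfl, ?_⟩
  have hk : (⟨((t'.1 : ℕ) + ((t.1 : ℕ) + (j - t'.1)) % j) % j, Nat.mod_lt _ hj⟩ : Fin j)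
      = t.1 := by
    ext
    simp only [Nat.add_mod_mod]
    rw [show (t'.1 : ℕ) + ((t.1 : ℕ) + (j - t'.1)) = t.1 + j by omega, Nat.add_mod_right,
      Nat.mod_eq_of_lt h1]
  rw [Matrix.mul_assoc, s6_pow_single, hk, Matrix.single_mul_single_same, one_mul]

/-- Lemma 3 of the paper: `⟨A, r⟩ = A + A r A + ⋯ + A r^{j−1} A ≅ M_n(ℂ)`. -/
theorem statement6 (j : ℕ) (hj : 0 < j) (a : Fin j → ℕ) (ha : ∀ i, 0 < a i) :
    Algebra.adjoin ℂ (blockDiagSet j a ∪ {rMat j a hj ha}) =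
      (⊤ : Subalgebra ℂ (Matrix (BIdx j a) (BIdx j a) ℂ)) ∧
    Subalgebra.toSubmodule (Algebra.adjoin ℂ (blockDiagSet j a ∪ {rMat j a hj ha})) =
      Submodule.span ℂ {z : Matrix (BIdx j a) (BIdx j a) ℂ |
        ∃ m ≤ j - 1, ∃ x ∈ blockDiagSet j a, ∃ y ∈ blockDiagSet j a,
          z = x * rMat j a hj ha ^ m * y} := by
  have hle : Submodule.span ℂ {z : Matrix (BIdx j a) (BIdx j a) ℂ |
        ∃ m ≤ j - 1, ∃ x ∈ blockDiagSet j a, ∃ y ∈ blockDiagSet j a,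
          z = x * rMat j a hj ha ^ m * y} ≤
      Subalgebra.toSubmodule (Algebra.adjoin ℂ (blockDiagSet j a ∪ {rMat j a hj ha})) := by
    rw [Submodule.span_le]
    rintro z ⟨m, -, x, hx, y, hy, rfl⟩
    have hr : rMat j a hj ha ∈ Algebra.adjoin ℂ (blockDiagSet j a ∪ {rMat j a hj ha}) :=
      Algebra.subset_adjoin (Or.inr rfl)
    change _ ∈ Algebra.adjoin ℂ (blockDiagSet j a ∪ {rMat j a hj ha})
    exact mul_mem (mul_mem (Algebra.subset_adjoin (Or.inl hx))
      (pow_mem hr m)) (Algebra.subset_adjoin (Or.inl hy))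
  rw [s6_span] at hle ⊢
  have h := top_le_iff.mp hle
  exact ⟨Algebra.toSubmodule_eq_top.mp h, h⟩
end
end

section
/- With A and v as defined in the context, the unital ℂ-subalgebra of M_n(ℂ) generated by A ∪ {v} is all of M_n(ℂ). -/
open Matrix

noncomputable section

/-- `A` and `v` generate `M_n(ℂ)` as a unital ℂ-algebra. -/
theorem statement7 (j : ℕ) (hj : 0 < j) (a : Fin j → ℕ) (ha : ∀ i, 0 < a i) :
    Algebra.adjoin ℂ (blockDiagSet j a ∪ {vMat j a hj ha}) =
      (⊤ : Subalgebra ℂ (Matrix (BIdx j a) (BIdx j a) ℂ)) := by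
  set S := Algebra.adjoin ℂ (blockDiagSet j a ∪ {vMat j a hj ha}) with hS
  have hv : vMat j a hj ha ∈ S := Algebra.subset_adjoin (Or.inr rfl)
  have hblk : ∀ (t t' : BIdx j a), t.1 = t'.1 → Matrix.single t t' (1 : ℂ) ∈ S := by
    intro t t' h
    refine Algebra.subset_adjoin (Or.inl ?_)
    intro u u' hu
    refine Matrix.single_apply_of_ne _ _ _ _ _ ?_
    rintro ⟨rfl, rfl⟩
    exact hu h
  have hstep : ∀ i : Fin j, Matrix.single (lastIdx j a ha (nextIdx j hj i))
      (lastIdx j a ha i) (1 : ℂ) ∈ S := by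
    intro i
    have h := S.mul_mem (S.mul_mem (hblk (lastIdx j a ha (nextIdx j hj i))
      (lastIdx j a ha (nextIdx j hj i)) rfl) hv)
      (hblk (lastIdx j a ha i) (lastIdx j a ha i) rfl)
    rw [Matrix.single_mul_mul_single] at h
    have hσ : sigmaPerm j a hj ha (lastIdx j a ha i) = lastIdx j a ha (nextIdx j hj i) :=
      if_pos rfl
    simpa [vMat, hσ] using h
  have hiter : ∀ (k : ℕ) (i : Fin j), Matrix.single (lastIdx j a ha ((nextIdx j hj)^[k] i))
      (lastIdx j a ha i) (1 : ℂ) ∈ S := by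
    intro k i
    induction k with
    | zero => exact hblk _ _ rfl
    | succ k ih =>
      rw [Function.iterate_succ_apply']
      have h := S.mul_mem (hstep ((nextIdx j hj)^[k] i)) ih
      simpa using h
  have hval : ∀ (k : ℕ) (i : Fin j), (((nextIdx j hj)^[k] i : Fin j) : ℕ) = (i + k) % j := by
    intro k i
    induction k with
    | zero => simp [Nat.mod_eq_of_lt i.2]
    | succ k ih =>
      rw [Function.iterate_succ_apply']
      simp [nextIdx, ih, Nat.add_assoc]
  have hall : ∀ t t' : BIdx j a, Matrix.single t t' (1 : ℂ) ∈ S := by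
    intro t t'
    have e : (nextIdx j hj)^[(t.1 : ℕ) + (j - t'.1)] t'.1 = t.1 := by
      apply Fin.ext
      rw [hval]
      have h1 := t'.1.2
      have h2 := t.1.2
      have : (t'.1 : ℕ) + (t.1 + (j - t'.1)) = t.1 + j := by omega
      rw [this, Nat.add_mod_right, Nat.mod_eq_of_lt h2]
    have h := hiter ((t.1 : ℕ) + (j - t'.1)) t'.1
    rw [e] at h
    have h' := S.mul_mem (S.mul_mem (hblk t (lastIdx j a ha t.1) rfl) h)
      (hblk (lastIdx j a ha t'.1) t' rfl)
    simpa using h'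
  rw [eq_top_iff]
  intro x _
  rw [Matrix.matrix_eq_sum_single x]
  refine S.sum_mem fun t _ => S.sum_mem fun t' _ => ?_
  have h := S.smul_mem (hall t t') (x t t')
  simpa [Matrix.smul_single] using h
end
end

section
/- With A, r, γ, w as defined in the context, the matrix w ∈ M_n(ℂ) satisfies: w is unitary, w^j = 1, w·x = x·w for every x ∈ A (so Ad w acts trivially on A), and w·r = γ·(r·w) (equivalently, Ad w(r) = w r w* = γ r). -/
open Matrix

noncomputable section

/-- The 'two simple yet important observations' of Section 3: `w` is unitary,
`w^j = 1`, `Ad w` acts trivially on `A`, and `Ad w (r) = γ r`. -/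
theorem statement8 (j : ℕ) (hj : 0 < j) (a : Fin j → ℕ) (ha : ∀ i, 0 < a i)
    (γ : ℂ) (hγ : γ = Complex.exp (2 * Real.pi * Complex.I / (j : ℂ))) :
    (wMat j a γ * (wMat j a γ).conjTranspose = 1 ∧
      (wMat j a γ).conjTranspose * wMat j a γ = 1) ∧
    wMat j a γ ^ j = 1 ∧
    (∀ x ∈ blockDiagSet j a, wMat j a γ * x = x * wMat j a γ) ∧
    wMat j a γ * rMat j a hj ha = γ • (rMat j a hj ha * wMat j a γ) ∧
    wMat j a γ * rMat j a hj ha * (wMat j a γ).conjTranspose = γ • rMat j a hj ha := by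
  have hγj : γ ^ j = 1 := by
    rw [hγ]
    exact (Complex.isPrimitiveRoot_exp j hj.ne').pow_eq_one
  have hn : ‖γ‖ = 1 := Complex.norm_eq_one_of_pow_eq_one hγj hj.ne'
  have hc : γ * star γ = 1 := by
    have h := Complex.mul_conj' γ
    rw [hn] at h
    simpa using h
  have hU : wMat j a γ * (wMat j a γ).conjTranspose = 1 := by
    unfold wMat
    rw [Matrix.diagonal_conjTranspose, Matrix.diagonal_mul_diagonal, ← Matrix.diagonal_one]
    congr 1
    funext t
    rw [Pi.star_apply, star_pow, ← mul_pow, hc, one_pow]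
  have hr : wMat j a γ * rMat j a hj ha = γ • (rMat j a hj ha * wMat j a γ) := by
    ext t t'
    unfold wMat rMat sMat
    simp only [Matrix.smul_apply, Matrix.diagonal_mul, Matrix.mul_diagonal, smul_eq_mul]
    by_cases h' : t' = lastIdx j a ha t'.1
    · by_cases hv : t = sigmaPerm j a hj ha t'
      · have h1 : t.1 = nextIdx j hj t'.1 := by
          rw [hv, sigmaPerm, if_pos h', lastIdx]
        have h2 : γ ^ (t.1 : ℕ) = γ * γ ^ (t'.1 : ℕ) := by
          rw [h1, nextIdx, ← pow_succ']
          exact (pow_eq_pow_mod _ hγj).symm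
        rw [h2]
        ring
      · simp [vMat, hv]
    · rw [if_neg h']
      ring
  refine ⟨⟨hU, mul_eq_one_comm.mp hU⟩, ?_, ?_, hr, ?_⟩
  · unfold wMat
    rw [Matrix.diagonal_pow, ← Matrix.diagonal_one]
    congr 1
    funext t
    rw [Pi.pow_apply, ← pow_mul, mul_comm, pow_mul, hγj, one_pow]
  · intro x hx
    ext t t'
    unfold wMat
    rw [Matrix.diagonal_mul, Matrix.mul_diagonal]
    by_cases h : t.1 = t'.1
    · rw [h, mul_comm]
    · rw [hx t t' h]
      ring
  · rw [hr, Matrix.smul_mul, Matrix.mul_assoc, hU, Matrix.mul_one]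
end
end

section
/- With the notation of the context, the unital ℂ-subalgebra of M_n(ℂ) ⊗ M_n(ℂ) generated by the set {x ⊗ 1 : x ∈ A} ∪ {r ⊗ 1} ∪ {p_{i,2} : 1 ≤ i ≤ j} ∪ {q_{i,2} : 1 ≤ i ≤ j} ∪ {w ⊗ r} is all of M_n(ℂ) ⊗ M_n(ℂ) ≅ M_{n²}(ℂ). (That is, M₂ := ⟨A₁, r₁, A₂, r₂⟩ = M_n(ℂ) ⊗ M_n(ℂ).) -/
open Matrix

noncomputable section

open Kronecker


theorem my_cyc {X : Type} (R : X → X → Prop) (hr : ∀ x, R x x)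
    (htr : ∀ x y z, R x y → R y z → R x z) (m : ℕ) (f : Fin m → X)
    (h : ∀ k l : Fin m, (l : ℕ) = ((k : ℕ) + 1) % m → R (f l) (f k)) (k l : Fin m) :
    R (f l) (f k) := by
  have key : ∀ d : ℕ, ∀ l : Fin m, (l : ℕ) = ((k : ℕ) + d) % m → R (f l) (f k) := by
    intro d
    induction d with
    | zero =>
      intro l hl
      have : l = k := by
        apply Fin.ext
        rw [hl, Nat.add_zero, Nat.mod_eq_of_lt k.2]
      rw [this]
      exact hr _
    | succ d ih =>
      intro l hl
      have hm : 0 < m := k.pos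
      refine htr _ (f ⟨((k : ℕ) + d) % m, Nat.mod_lt _ hm⟩) _ (h _ _ ?_) (ih _ rfl)
      simp only [hl]
      rw [Nat.mod_add_mod, Nat.add_assoc]
  refine key (m - k + l) l ?_
  have := k.2
  rw [show (k : ℕ) + (m - k + l) = l + m by omega, Nat.add_mod_right, Nat.mod_eq_of_lt l.2]

theorem my_entry {X : Type} [Fintype X] [DecidableEq X] (T : Subalgebra ℂ (Matrix X X ℂ))
    (t u : X) (ht : Matrix.single t t (1 : ℂ) ∈ T) (hu : Matrix.single u u (1 : ℂ) ∈ T)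
    (M : Matrix X X ℂ) (hM : M ∈ T) (h : M t u ≠ 0) : Matrix.single t u (1 : ℂ) ∈ T := by
  have h1 := T.smul_mem (T.mul_mem (T.mul_mem ht hM) hu) (M t u)⁻¹
  have h2 : (M t u)⁻¹ • (Matrix.single t t (1 : ℂ) * M * Matrix.single u u (1 : ℂ))
      = Matrix.single t u (1 : ℂ) := by
    rw [Matrix.single_mul_mul_single]
    simp [h]
  rwa [h2] at h1

theorem my_diag {X : Type} [Fintype X] [DecidableEq X] (T : Subalgebra ℂ (Matrix X X ℂ))
    (d : X → ℂ) (hd : Matrix.diagonal d ∈ T) (t : X) (ht : ∀ u, d u = d t → u = t) :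
    Matrix.single t t (1 : ℂ) ∈ T := by
  have key : ∀ s : Finset X, Matrix.diagonal (fun u => ∏ x ∈ s, (d u - d x)) ∈ T := by
    intro s
    induction s using Finset.induction_on with
    | empty =>
      simp only [Finset.prod_empty]
      rw [Matrix.diagonal_one]
      exact T.one_mem
    | insert x s hx ih =>
      have h2 : Matrix.diagonal d - (d x) • (1 : Matrix X X ℂ) ∈ T :=
        T.sub_mem hd (T.smul_mem T.one_mem _)
      have h3 := T.mul_mem h2 ih
      convert h3 using 1
      rw [← Matrix.diagonal_one, ← Matrix.diagonal_smul, Matrix.diagonal_sub,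
        Matrix.diagonal_mul_diagonal]
      congr 1
      funext u
      rw [Finset.prod_insert hx]
      simp
  have h0 : ∏ x ∈ Finset.univ.erase t, (d t - d x) ≠ 0 := by
    rw [Finset.prod_ne_zero_iff]
    intro x hx h
    exact (Finset.ne_of_mem_erase hx) (ht x (sub_eq_zero.mp h).symm)
  have h1 := T.smul_mem (key (Finset.univ.erase t)) (∏ x ∈ Finset.univ.erase t, (d t - d x))⁻¹
  convert h1 using 1
  rw [← Matrix.diagonal_single, ← Matrix.diagonal_smul]
  congr 1
  funext u
  by_cases hu : u = t
  · subst hu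
    simp [h0]
  · have : ∏ x ∈ Finset.univ.erase t, (d u - d x) = 0 :=
      Finset.prod_eq_zero (Finset.mem_erase.mpr ⟨hu, Finset.mem_univ u⟩) (sub_self _)
    simp [hu, this]

theorem my_top {X : Type} [Fintype X] [DecidableEq X] (T : Subalgebra ℂ (Matrix X X ℂ))
    (h : ∀ t u, Matrix.single t u (1 : ℂ) ∈ T) (M : Matrix X X ℂ) : M ∈ T := by
  rw [Matrix.matrix_eq_sum_single M]
  refine T.sum_mem fun t _ => T.sum_mem fun u _ => ?_
  have := T.smul_mem (h t u) (M t u)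
  simpa using this

theorem my_rMat (j : ℕ) (hj : 0 < j) (a : Fin j → ℕ) (ha : ∀ i, 0 < a i) (i : Fin j) :
    rMat j a hj ha (lastIdx j a ha (nextIdx j hj i)) (lastIdx j a ha i) = 1 := by
  have h : ∀ i, (lastIdx j a ha i).1 = i := fun _ => rfl
  simp [rMat, sMat, vMat, sigmaPerm, Matrix.mul_diagonal, Matrix.diagonal_mul, h]

theorem my_all (j : ℕ) (hj : 0 < j) (a : Fin j → ℕ) (ha : ∀ i, 0 < a i)
    (T : Subalgebra ℂ (Matrix (BIdx j a) (BIdx j a) ℂ))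
    (hb : ∀ i : Fin j, ∀ k l : Fin (a i),
      Matrix.single (⟨i, l⟩ : BIdx j a) (⟨i, k⟩ : BIdx j a) (1 : ℂ) ∈ T)
    (hr : rMat j a hj ha ∈ T) (M : Matrix (BIdx j a) (BIdx j a) ℂ) : M ∈ T := by
  have htr : ∀ x y z : BIdx j a, Matrix.single x y (1 : ℂ) ∈ T → Matrix.single y z (1 : ℂ) ∈ T →
      Matrix.single x z (1 : ℂ) ∈ T := by
    intro x y z h1 h2
    have := T.mul_mem h1 h2
    simpa using this
  have hc : ∀ i i' : Fin j,
      Matrix.single (lastIdx j a ha i') (lastIdx j a ha i) (1 : ℂ) ∈ T := by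
    refine my_cyc (fun x y : BIdx j a => Matrix.single x y (1 : ℂ) ∈ T)
      (fun x => hb x.1 x.2 x.2) htr j (lastIdx j a ha) ?_
    intro k l hl
    have : l = nextIdx j hj k := Fin.ext hl
    subst this
    refine my_entry T _ _ (hb _ _ _) (hb _ _ _) _ hr ?_
    rw [my_rMat]
    exact one_ne_zero
  refine my_top T ?_ M
  rintro ⟨i, k⟩ ⟨i', k'⟩
  exact htr _ _ _ (hb i _ k) (htr _ _ _ (hc i' i) (hb i' k' _))

theorem my_strip {X Y : Type} [Fintype X] [DecidableEq X] [Fintype Y] [DecidableEq Y]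
    (S : Subalgebra ℂ (Matrix (X × Y) (X × Y) ℂ))
    (h1 : ∀ x : Matrix X X ℂ, x ⊗ₖ (1 : Matrix Y Y ℂ) ∈ S)
    (x : Matrix X X ℂ) (y : Matrix Y Y ℂ) (hxy : x ⊗ₖ y ∈ S) (t u : X) (htu : x t u ≠ 0) :
    (1 : Matrix X X ℂ) ⊗ₖ y ∈ S := by
  have h : ∑ s : X, (Matrix.single s t (1 : ℂ) * x * Matrix.single u s (1 : ℂ)) ⊗ₖ y ∈ S := by
    refine S.sum_mem fun s _ => ?_
    have := S.mul_mem (S.mul_mem (h1 (Matrix.single s t 1)) hxy) (h1 (Matrix.single u s 1))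
    simpa only [← Matrix.mul_kronecker_mul, one_mul, mul_one] using this
  have h2 := S.smul_mem h (x t u)⁻¹
  convert h2 using 1
  ext ⟨p, q⟩ ⟨p', q'⟩
  simp only [Matrix.single_mul_mul_single, Matrix.smul_apply, Matrix.sum_apply,
    Matrix.kronecker_apply, Matrix.single_apply, Matrix.one_apply, one_mul, mul_one, smul_eq_mul,
    ← Finset.sum_mul]
  by_cases hp : p = p'
  · subst hp
    simp [htu]
  · have : ∀ s, ¬ (s = p ∧ s = p') := fun s hs => hp (hs.1.symm.trans hs.2)
    simp [hp, this]

/-- The generation claim `M₂ = ⟨A₁, r₁, A₂, r₂⟩ = M_n(ℂ) ⊗ M_n(ℂ)` of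
Section 3 of the paper. -/
theorem statement12 (j : ℕ) (hj : 0 < j) (a : Fin j → ℕ) (ha : ∀ i, 0 < a i)
    (γ : ℂ) (hγ : γ = Complex.exp (2 * Real.pi * Complex.I / (j : ℂ))) :
    Algebra.adjoin ℂ
      ({y | ∃ x ∈ blockDiagSet j a, y = x ⊗ₖ (1 : Matrix (BIdx j a) (BIdx j a) ℂ)} ∪
        {rMat j a hj ha ⊗ₖ (1 : Matrix (BIdx j a) (BIdx j a) ℂ)} ∪
        {y | ∃ i : Fin j, y = (1 : Matrix (BIdx j a) (BIdx j a) ℂ) ⊗ₖ pBlock j a i} ∪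
        {y | ∃ i : Fin j, y = (qBlock j a i + 1 - oneBlock j a i) ⊗ₖ qBlock j a i} ∪
        {wMat j a γ ⊗ₖ rMat j a hj ha}) =
      (⊤ : Subalgebra ℂ (Matrix (BIdx j a × BIdx j a) (BIdx j a × BIdx j a) ℂ)) := by
  set S := Algebra.adjoin ℂ
      ({y | ∃ x ∈ blockDiagSet j a, y = x ⊗ₖ (1 : Matrix (BIdx j a) (BIdx j a) ℂ)} ∪
        {rMat j a hj ha ⊗ₖ (1 : Matrix (BIdx j a) (BIdx j a) ℂ)} ∪
        {y | ∃ i : Fin j, y = (1 : Matrix (BIdx j a) (BIdx j a) ℂ) ⊗ₖ pBlock j a i} ∪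
        {y | ∃ i : Fin j, y = (qBlock j a i + 1 - oneBlock j a i) ⊗ₖ qBlock j a i} ∪
        {wMat j a γ ⊗ₖ rMat j a hj ha}) with hS
  have gA : ∀ x ∈ blockDiagSet j a, x ⊗ₖ (1 : Matrix (BIdx j a) (BIdx j a) ℂ) ∈ S :=
    fun x hx => Algebra.subset_adjoin (Or.inl (Or.inl (Or.inl (Or.inl ⟨x, hx, rfl⟩))))
  have gr : rMat j a hj ha ⊗ₖ (1 : Matrix (BIdx j a) (BIdx j a) ℂ) ∈ S :=
    Algebra.subset_adjoin (Or.inl (Or.inl (Or.inl (Or.inr rfl))))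
  have gp : ∀ i, (1 : Matrix (BIdx j a) (BIdx j a) ℂ) ⊗ₖ pBlock j a i ∈ S :=
    fun i => Algebra.subset_adjoin (Or.inl (Or.inl (Or.inr ⟨i, rfl⟩)))
  have gq : ∀ i, (qBlock j a i + 1 - oneBlock j a i) ⊗ₖ qBlock j a i ∈ S :=
    fun i => Algebra.subset_adjoin (Or.inl (Or.inr ⟨i, rfl⟩))
  have gw : wMat j a γ ⊗ₖ rMat j a hj ha ∈ S :=
    Algebra.subset_adjoin (Or.inr rfl)
  clear_value S
  let T1 : Subalgebra ℂ (Matrix (BIdx j a) (BIdx j a) ℂ) :=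
    { carrier := {x | x ⊗ₖ (1 : Matrix (BIdx j a) (BIdx j a) ℂ) ∈ S}
      mul_mem' := by
        intro x y hx hy
        have := S.mul_mem hx hy
        rwa [← Matrix.mul_kronecker_mul, one_mul] at this
      add_mem' := by
        intro x y hx hy
        have := S.add_mem hx hy
        rwa [← Matrix.add_kronecker] at this
      algebraMap_mem' := by
        intro c
        have := S.smul_mem S.one_mem c
        rwa [← Matrix.one_kronecker_one, ← Matrix.smul_kronecker,
          ← Algebra.algebraMap_eq_smul_one] at this }
  let T2 : Subalgebra ℂ (Matrix (BIdx j a) (BIdx j a) ℂ) :=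
    { carrier := {x | (1 : Matrix (BIdx j a) (BIdx j a) ℂ) ⊗ₖ x ∈ S}
      mul_mem' := by
        intro x y hx hy
        have := S.mul_mem hx hy
        rwa [← Matrix.mul_kronecker_mul, one_mul] at this
      add_mem' := by
        intro x y hx hy
        have := S.add_mem hx hy
        rwa [← Matrix.kronecker_add] at this
      algebraMap_mem' := by
        intro c
        have := S.smul_mem S.one_mem c
        rwa [← Matrix.one_kronecker_one, ← Matrix.kronecker_smul,
          ← Algebra.algebraMap_eq_smul_one] at this }
  have h1 : ∀ x : Matrix (BIdx j a) (BIdx j a) ℂ,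
      x ⊗ₖ (1 : Matrix (BIdx j a) (BIdx j a) ℂ) ∈ S := by
    refine my_all j hj a ha T1 ?_ gr
    intro i k l
    refine gA _ ?_
    intro t t' htt
    rw [Matrix.single_apply, if_neg]
    rintro ⟨rfl, rfl⟩
    exact htt rfl
  have hq : ∀ i, qBlock j a i ∈ T2 := by
    intro i
    refine my_strip S h1 _ _ (gq i) ⟨i, ⟨(0 + 1) % a i, Nat.mod_lt _ (ha i)⟩⟩ ⟨i, ⟨0, ha i⟩⟩ ?_
    have : (1 : Matrix (BIdx j a) (BIdx j a) ℂ) - oneBlock j a i =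
        Matrix.diagonal fun t : BIdx j a => if t.1 = i then (0 : ℂ) else 1 := by
      rw [oneBlock, ← Matrix.diagonal_one, Matrix.diagonal_sub]
      congr 1
      funext t
      split_ifs <;> simp
    rw [add_sub_assoc, this, Matrix.add_apply]
    simp [qBlock, Matrix.diagonal_apply]
  have hrr : rMat j a hj ha ∈ T2 := by
    refine my_strip S h1 _ _ gw (lastIdx j a ha ⟨0, hj⟩) (lastIdx j a ha ⟨0, hj⟩) ?_
    simp [wMat, lastIdx]
  have hd : ∀ t : BIdx j a, Matrix.single t t (1 : ℂ) ∈ T2 := by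
    rintro ⟨i, k⟩
    refine my_diag T2 _ (gp i) ⟨i, k⟩ ?_
    rintro ⟨i', k'⟩ h
    simp only [if_true] at h
    by_cases hi : i' = i
    · subst hi
      rw [if_pos rfl] at h
      have hprim := Complex.isPrimitiveRoot_exp (a i') (ha i').ne'
      have := hprim.pow_inj k'.2 k.2 h
      rw [Fin.ext this]
    · rw [if_neg hi] at h
      exact absurd h.symm (pow_ne_zero _ (Complex.exp_ne_zero _))
  have h2 : ∀ x : Matrix (BIdx j a) (BIdx j a) ℂ,
      (1 : Matrix (BIdx j a) (BIdx j a) ℂ) ⊗ₖ x ∈ S := by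
    refine my_all j hj a ha T2 ?_ hrr
    intro i
    refine my_cyc (fun x y : BIdx j a => Matrix.single x y (1 : ℂ) ∈ T2) hd ?_ (a i)
      (fun k => ⟨i, k⟩) ?_
    · intro x y z hx hy
      have := T2.mul_mem hx hy
      simpa using this
    · intro k l hl
      refine my_entry T2 _ _ (hd _) (hd _) _ (hq i) ?_
      simp [qBlock, hl]
  rw [eq_top_iff]
  rintro M -
  refine my_top S ?_ M
  rintro ⟨t, t'⟩ ⟨u, u'⟩
  have := S.mul_mem (h1 (Matrix.single t u 1)) (h2 (Matrix.single t' u' 1))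
  rw [← Matrix.mul_kronecker_mul, one_mul, mul_one, Matrix.single_kronecker_single, mul_one] at this
  exact this
end
end

section
/- With the notation of the context, the unital ℂ-subalgebra of M_n(ℂ) ⊗ M_n(ℂ) generated by {p_{i,2} : 1 ≤ i ≤ j} ∪ {q_{i,2} : 1 ≤ i ≤ j} is isomorphic as a ℂ-algebra to the direct sum ⊕_{i=1}^j M_{a_i}(ℂ) (that is, A₂ ≅ A). -/
open Matrix

noncomputable section

open Kronecker

section helpers
variable {j : ℕ} {a : Fin j → ℕ}

theorem nsmul_one_val {n : ℕ} [NeZero n] (m : ℕ) : ((m • (1 : Fin n) : Fin n) : ℕ) = m % n := by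
  induction m with
  | zero => simp
  | succ m ih => rw [succ_nsmul, Fin.val_add, ih, Fin.val_one', Nat.add_mod m 1 n]

abbrev RR (j : ℕ) (a : Fin j → ℕ) : Type := (i : Fin j) → Matrix (Fin (a i)) (Fin (a i)) ℂ

def gam (n : ℕ) : ℂ := Complex.exp (2 * Real.pi * Complex.I / (n : ℂ))

def PP (j : ℕ) (a : Fin j → ℕ) (i : Fin j) : RR j a :=
  Pi.single i (Matrix.diagonal fun k : Fin (a i) => gam (a i) ^ (k : ℕ))

def QQ (j : ℕ) (a : Fin j → ℕ) [∀ i, NeZero (a i)] (i : Fin j) : RR j a :=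
  Pi.single i (Matrix.of fun k l : Fin (a i) => if k = l + 1 then (1 : ℂ) else 0)

def EE (i : Fin j) (k l : Fin (a i)) : RR j a := Pi.single i (Matrix.single k l 1)

def genS (j : ℕ) (a : Fin j → ℕ) [∀ i, NeZero (a i)] : Set (RR j a) :=
  {y | ∃ i, y = PP j a i} ∪ {y | ∃ i, y = QQ j a i}

theorem single_sum {ι : Type} (s : Finset ι) (i : Fin j)
    (f : ι → Matrix (Fin (a i)) (Fin (a i)) ℂ) :
    (Pi.single i (∑ m ∈ s, f m) : RR j a) = ∑ m ∈ s, Pi.single i (f m) :=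
  map_sum (AddMonoidHom.single (fun i => Matrix (Fin (a i)) (Fin (a i)) ℂ) i) f s

theorem PP_pow (i : Fin j) (m : ℕ) : PP j a i ^ (m + 1) =
    Pi.single i (Matrix.diagonal fun k : Fin (a i) => (gam (a i) ^ (k : ℕ)) ^ (m + 1)) := by
  induction m with
  | zero => simp [PP]
  | succ m ih =>
    rw [pow_succ, ih, PP, ← Pi.single_mul, Matrix.diagonal_mul_diagonal]
    simp only [pow_succ]

theorem EE_diag [∀ i, NeZero (a i)] (i : Fin j) (k : Fin (a i)) :
    EE i k k = ∑ m ∈ Finset.range (a i),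
      ((a i : ℂ)⁻¹ * ((gam (a i) ^ (k : ℕ))⁻¹) ^ (m + 1)) • PP j a i ^ (m + 1) := by
  have hprim : IsPrimitiveRoot (gam (a i)) (a i) :=
    Complex.isPrimitiveRoot_exp _ (NeZero.ne _)
  have hg0 : gam (a i) ≠ 0 := Complex.exp_ne_zero _
  have hn : (a i : ℂ) ≠ 0 := Nat.cast_ne_zero.2 (NeZero.ne _)
  simp only [PP_pow, ← Pi.single_smul, EE]
  rw [← single_sum]
  congr 1
  ext s t
  rw [Matrix.sum_apply]
  by_cases hst : s = t
  · subst hst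
    simp only [Matrix.smul_apply, Matrix.diagonal_apply_eq, smul_eq_mul, mul_assoc]
    rw [← Finset.mul_sum]
    simp only [← mul_pow]
    by_cases hk : k = s
    · subst hk
      simp [hg0, hn]
    · rw [Matrix.single_apply_of_ne _ _ _ _ _ (by simp [hk])]
      set z := (gam (a i) ^ (k : ℕ))⁻¹ * gam (a i) ^ (s : ℕ) with hz
      have hz1 : z ≠ 1 := by
        intro h
        apply hk
        rw [hz, inv_mul_eq_one₀ (pow_ne_zero _ hg0)] at h
        exact Fin.ext (hprim.pow_inj k.2 s.2 h)
      have hza : z ^ (a i) = 1 := by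
        rw [hz, mul_pow, inv_pow, ← pow_mul, ← pow_mul, mul_comm (k : ℕ), mul_comm (s : ℕ),
          pow_mul, pow_mul, hprim.pow_eq_one]
        simp
      have := geom_sum_mul z (a i)
      rw [hza, sub_self, mul_eq_zero] at this
      have h0 := this.resolve_right (sub_ne_zero.2 hz1)
      simp only [pow_succ, ← Finset.sum_mul, h0]
      simp
  · rw [Matrix.single_apply_of_ne _ _ _ _ _ (by rintro ⟨rfl, rfl⟩; exact hst rfl)]
    simp [Matrix.diagonal_apply_ne _ hst]

theorem QQ_mul_EE [∀ i, NeZero (a i)] (i : Fin j) (k l : Fin (a i)) :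
    QQ j a i * EE i k l = EE i (k + 1) l := by
  rw [QQ, EE, EE, ← Pi.single_mul]
  congr 1
  ext s t
  by_cases ht : l = t
  · subst ht
    simp [Matrix.single_apply, eq_comm]
  · rw [Matrix.mul_single_apply_of_ne _ _ _ _ _ (Ne.symm ht),
      Matrix.single_apply_of_ne _ _ _ _ _ (by simp [ht])]

theorem EE_mem [∀ i, NeZero (a i)] (i : Fin j) (k l : Fin (a i)) :
    EE i k l ∈ Algebra.adjoin ℂ (genS j a) := by
  have hP : PP j a i ∈ Algebra.adjoin ℂ (genS j a) :=
    Algebra.subset_adjoin (Or.inl ⟨i, rfl⟩)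
  have hQ : QQ j a i ∈ Algebra.adjoin ℂ (genS j a) :=
    Algebra.subset_adjoin (Or.inr ⟨i, rfl⟩)
  have h : ∀ m : ℕ, EE i (l + m • (1 : Fin (a i))) l ∈ Algebra.adjoin ℂ (genS j a) := by
    intro m
    induction m with
    | zero =>
      rw [zero_nsmul, add_zero, EE_diag]
      exact sum_mem fun m _ => Subalgebra.smul_mem _ (pow_mem hP _) _
    | succ m ih =>
      rw [succ_nsmul, ← add_assoc, ← QQ_mul_EE]
      exact mul_mem hQ ih
  have := h ((k - l : Fin (a i)) : ℕ)
  have h2 : ((k - l : Fin (a i)) : ℕ) • (1 : Fin (a i)) = k - l := by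
    apply Fin.ext
    rw [nsmul_one_val, Nat.mod_eq_of_lt (k - l).2]
  rw [h2] at this
  simpa using this

theorem adjoin_genS [∀ i, NeZero (a i)] : Algebra.adjoin ℂ (genS j a) = ⊤ := by
  rw [eq_top_iff]
  intro x _
  rw [← Finset.univ_sum_single x]
  refine sum_mem fun i _ => ?_
  have : (Pi.single i (x i) : RR j a) = ∑ k, ∑ l, (x i k l) • EE i k l := by
    simp only [EE, ← Pi.single_smul]
    conv_lhs => rw [Matrix.matrix_eq_sum_single (x i)]
    simp only [single_sum, Matrix.smul_single, smul_eq_mul, mul_one]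
  rw [this]
  exact sum_mem fun k _ => sum_mem fun l _ => Subalgebra.smul_mem _ (EE_mem i k l) _

/-- cyclic shift of block `i`. -/
def UU (j : ℕ) (a : Fin j → ℕ) [∀ i, NeZero (a i)] (i : Fin j) : Equiv.Perm (BIdx j a) :=
  Equiv.Perm.sigmaCongrRightHom _ (Pi.mulSingle i (Equiv.addRight (1 : Fin (a i))))

theorem UU_pow [∀ i, NeZero (a i)] (i : Fin j) : UU j a i ^ (a i) = 1 := by
  rw [UU, ← map_pow, ← Pi.mulSingle_pow]
  have : (Equiv.addRight (1 : Fin (a i))) ^ (a i) = 1 := by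
    have h0 : a i • (1 : Fin (a i)) = 0 := by
      apply Fin.ext
      rw [nsmul_one_val]
      simp
    ext x
    simp [h0]
  rw [this]
  simp

theorem UU_pow_mod [∀ i, NeZero (a i)] (i : Fin j) (m : ℕ) :
    UU j a i ^ (m % a i) = UU j a i ^ m := by
  conv_rhs => rw [← Nat.mod_add_div m (a i), pow_add, pow_mul, UU_pow, one_pow, mul_one]

theorem fin_succ_iff {n : ℕ} [NeZero n] (k l : Fin n) : k = l + 1 ↔ (k : ℕ) = (l + 1) % n := by
  rw [Fin.ext_iff, Fin.val_add, Fin.val_one']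
  simp

theorem u_apply [∀ i, NeZero (a i)] (i : Fin j) (s s' : BIdx j a) :
    (qBlock j a i + 1 - oneBlock j a i) s s' = if s = UU j a i s' then 1 else 0 := by
  obtain ⟨c, s⟩ := s
  obtain ⟨c', s'⟩ := s'
  by_cases hc' : c' = i
  · subst hc'
    have : UU j a c' ⟨c', s'⟩ = ⟨c', s' + 1⟩ := by simp [UU]
    rw [this]
    by_cases hc : c = c'
    · subst hc
      by_cases h : s = s'
      · subst h
        have h1 := fin_succ_iff s s
        simp only [qBlock, oneBlock, Matrix.sub_apply, Matrix.add_apply, Matrix.of_apply,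
          Matrix.one_apply_eq, Matrix.diagonal_apply_eq, true_and, if_true, add_sub_cancel_right,
          ← h1, Sigma.mk.injEq, heq_eq_eq]
      · simp [qBlock, oneBlock, fin_succ_iff, Matrix.diagonal_apply, Matrix.one_apply, h]
    · simp [qBlock, oneBlock, Matrix.diagonal_apply, Matrix.one_apply, hc]
  · have : UU j a i ⟨c', s'⟩ = ⟨c', s'⟩ := by simp [UU, hc']
    rw [this]
    by_cases h : (⟨c, s⟩ : BIdx j a) = ⟨c', s'⟩
    · rw [h]; simp [qBlock, oneBlock, hc']
    · simp [qBlock, oneBlock, Matrix.diagonal_apply, Matrix.one_apply, hc', h]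

def sig (j : ℕ) (a : Fin j → ℕ) [∀ i, NeZero (a i)] : (BIdx j a × BIdx j a) ≃ (BIdx j a × BIdx j a) :=
  Equiv.prodCongrLeft fun t : BIdx j a => UU j a t.1 ^ (t.2 : ℕ)

def phi0 (j : ℕ) (a : Fin j → ℕ) : RR j a →ₐ[ℂ] Matrix (BIdx j a × BIdx j a) (BIdx j a × BIdx j a) ℂ :=
  AlgHom.ofLinearMap
    { toFun := fun x => (1 : Matrix (BIdx j a) (BIdx j a) ℂ) ⊗ₖ Matrix.blockDiagonal' x
      map_add' := fun x y => by rw [Matrix.blockDiagonal'_add, Matrix.kronecker_add]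
      map_smul' := fun c x => by
        rw [Matrix.blockDiagonal'_smul, Matrix.kronecker_smul]; rfl }
    (by simp)
    (fun x y => by
      simp only [LinearMap.coe_mk, AddHom.coe_mk]
      rw [← Matrix.mul_kronecker_mul, one_mul, ← Matrix.blockDiagonal'_mul]; rfl)

def phi (j : ℕ) (a : Fin j → ℕ) [∀ i, NeZero (a i)] :
    RR j a →ₐ[ℂ] Matrix (BIdx j a × BIdx j a) (BIdx j a × BIdx j a) ℂ :=
  (Matrix.reindexAlgEquiv ℂ ℂ (sig j a)).toAlgHom.comp (phi0 j a)

theorem phi_apply [∀ i, NeZero (a i)] (x : RR j a) (s t s' t' : BIdx j a) :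
    phi j a x (s, t) (s', t') =
      if s = (UU j a t.1 ^ (t.2 : ℕ)) ((UU j a t'.1 ^ (t'.2 : ℕ))⁻¹ s') then
        Matrix.blockDiagonal' x t t' else 0 := by
  have : phi j a x (s, t) (s', t') =
      (1 : Matrix (BIdx j a) (BIdx j a) ℂ) ((UU j a t.1 ^ (t.2 : ℕ))⁻¹ s)
        ((UU j a t'.1 ^ (t'.2 : ℕ))⁻¹ s') * Matrix.blockDiagonal' x t t' := rfl
  rw [this, Matrix.one_apply]
  simp only [Equiv.Perm.inv_eq_iff_eq, ite_mul, one_mul, zero_mul]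

theorem phi_inj [∀ i, NeZero (a i)] (hj : 0 < j) : Function.Injective (phi j a) := by
  intro x y h
  apply Matrix.blockDiagonal'_injective
  ext t t'
  have h1 := congrFun (congrFun h ((UU j a t.1 ^ (t.2 : ℕ)) ((UU j a t'.1 ^ (t'.2 : ℕ))⁻¹ t), t)) (t, t')
  simpa [phi_apply] using h1

theorem phi_P [∀ i, NeZero (a i)] (i : Fin j) :
    phi j a (PP j a i) = (1 : Matrix (BIdx j a) (BIdx j a) ℂ) ⊗ₖ pBlock j a i := by
  ext ⟨s, t⟩ ⟨s', t'⟩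
  rw [phi_apply, Matrix.kroneckerMap_apply]
  have hb : Matrix.blockDiagonal' (PP j a i) = pBlock j a i := by
    ext ⟨c, k⟩ ⟨c', l⟩
    by_cases hc : c = c'
    · subst hc
      rw [Matrix.blockDiagonal'_apply_eq]
      by_cases hi : c = i
      · subst hi
        simp [PP, pBlock, Matrix.diagonal_apply, gam]
      · simp [PP, pBlock, Matrix.diagonal_apply, hi]
    · rw [Matrix.blockDiagonal'_apply_ne _ _ _ hc]
      simp [pBlock, Matrix.diagonal_apply, hc]
  rw [hb]
  by_cases h : t = t'
  · subst h
    simp [Matrix.one_apply]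
  · simp [pBlock, Matrix.diagonal_apply, h]

theorem phi_Q [∀ i, NeZero (a i)] (i : Fin j) :
    phi j a (QQ j a i) = (qBlock j a i + 1 - oneBlock j a i) ⊗ₖ qBlock j a i := by
  ext ⟨s, t⟩ ⟨s', t'⟩
  rw [phi_apply, Matrix.kroneckerMap_apply, u_apply]
  have hb : Matrix.blockDiagonal' (QQ j a i) = qBlock j a i := by
    ext ⟨c, k⟩ ⟨c', l⟩
    by_cases hc : c = c'
    · subst hc
      rw [Matrix.blockDiagonal'_apply_eq]
      by_cases hi : c = i
      · subst hi
        simp [QQ, qBlock, fin_succ_iff]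
      · simp [QQ, qBlock, hi]
    · rw [Matrix.blockDiagonal'_apply_ne _ _ _ hc]
      simp only [qBlock, Matrix.of_apply]
      rw [if_neg]
      rintro ⟨rfl, rfl, _⟩
      exact hc rfl
  rw [hb]
  by_cases h : t.1 = i ∧ t'.1 = i ∧ (t.2 : ℕ) = ((t'.2 : ℕ) + 1) % a i
  · obtain ⟨h1, h2, h3⟩ := h
    have h4 : ∀ c c' : Fin j, ∀ m m' : ℕ, c = i → c' = i → m = (m' + 1) % a i →
        (UU j a c ^ m) ((UU j a c' ^ m')⁻¹ s') = UU j a i s' := by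
      rintro c c' m m' rfl rfl rfl
      rw [UU_pow_mod, pow_succ']
      simp
    rw [h4 _ _ _ _ h1 h2 h3]
    simp
  · have : qBlock j a i t t' = 0 := by simp only [qBlock, Matrix.of_apply, if_neg h]
    simp [this]

end helpers

/-- The claim `A₂ ≅ A = ⊕_{i=1}^j M_{a_i}(ℂ)`: the unital subalgebra of
`M_n(ℂ) ⊗ M_n(ℂ)` generated by the `p_{i,2}` and `q_{i,2}` is isomorphic as a
ℂ-algebra to `⊕_{i=1}^j M_{a_i}(ℂ)`. -/
theorem statement13 (j : ℕ) (hj : 0 < j) (a : Fin j → ℕ) (ha : ∀ i, 0 < a i) :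
    Nonempty
      ((Algebra.adjoin ℂ
        ({y | ∃ i : Fin j, y = (1 : Matrix (BIdx j a) (BIdx j a) ℂ) ⊗ₖ pBlock j a i} ∪
          {y | ∃ i : Fin j, y = (qBlock j a i + 1 - oneBlock j a i) ⊗ₖ qBlock j a i}))
        ≃ₐ[ℂ] ((i : Fin j) → Matrix (Fin (a i)) (Fin (a i)) ℂ)) := by
  haveI : ∀ i, NeZero (a i) := fun i => ⟨(ha i).ne'⟩
  have himg : ({y | ∃ i : Fin j, y = (1 : Matrix (BIdx j a) (BIdx j a) ℂ) ⊗ₖ pBlock j a i} ∪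
      {y | ∃ i : Fin j, y = (qBlock j a i + 1 - oneBlock j a i) ⊗ₖ qBlock j a i}) =
      phi j a '' genS j a := by
    ext y
    simp only [genS, Set.image_union, Set.mem_union, Set.mem_setOf_eq, Set.mem_image,
      ← phi_P, ← phi_Q]
    constructor
    · rintro (⟨i, rfl⟩ | ⟨i, rfl⟩)
      · exact Or.inl ⟨_, ⟨i, rfl⟩, rfl⟩
      · exact Or.inr ⟨_, ⟨i, rfl⟩, rfl⟩
    · rintro (⟨_, ⟨i, rfl⟩, rfl⟩ | ⟨_, ⟨i, rfl⟩, rfl⟩)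
      · exact Or.inl ⟨i, rfl⟩
      · exact Or.inr ⟨i, rfl⟩
  rw [himg, ← AlgHom.map_adjoin, adjoin_genS, Algebra.map_top]
  exact ⟨(AlgEquiv.ofInjective (phi j a) (phi_inj hj)).symm⟩
end
end
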